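/- arXiv:1701.00787 — 2 statements merged into one kernel-verified Lean document; each statement's English description precedes it below -/
import Mathlib

section
/- Let δ be a real number with δ ≥ 1. Then for every n ∈ ℕ (n ≥ 0) and every t ∈ (0, π], the integral F_n^{(0,0),δ}(t) is nonnegative. -/
open MeasureTheory Real Set

/-- Generalized binomial coefficient `C(u, v) = Γ(u+1) / (Γ(v+1) Γ(u-v+1))`. -/
noncomputable def genBinom (u v : ℝ) : ℝ :=
  Real.Gamma (u + 1) / (Real.Gamma (v + 1) * Real.Gamma (u - v + 1))

/-- Jacobi polynomial `P_n^{(a,b)}(x)`. -/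
noncomputable def jacobiP (n : ℕ) (a b x : ℝ) : ℝ :=
  ∑ k ∈ Finset.range (n + 1),
    genBinom ((n : ℝ) + a) ((n : ℝ) - (k : ℝ)) * genBinom ((n : ℝ) + b) (k : ℝ) *
      ((x - 1) / 2) ^ k * ((x + 1) / 2) ^ (n - k)

/-- `F_n^{(α,β),δ}(t)`. -/
noncomputable def FJ (n : ℕ) (α β δ t : ℝ) : ℝ :=
  ∫ θ in (0:ℝ)..t, (t - θ) ^ δ * jacobiP n (α - 1/2) (β - 1/2) (Real.cos θ) *
    (Real.sin (θ / 2)) ^ (2 * α) * (Real.cos (θ / 2)) ^ (2 * β)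

/-!
For `α = β = 0` the trigonometric weight is `1` and the Jacobi polynomial is a positive multiple of
the Chebyshev polynomial `T_n`, because the even part of `(cos w + i sin w)^(2n)` expands
`T_n (cos 2w)` in powers of `sin² w` and `cos² w` with the same binomial coefficients. So `F_n` is a
positive multiple of `∫₀ᵗ (t - θ)^δ cos (nθ) dθ`. Integrating by parts twice trades `cos (nθ)` for
the nonnegative `(1 - cos (nθ)) / n²` against the nonnegative weight `δ(δ - 1)(t - θ)^(δ - 2)`.
At `δ = 1` that weight vanishes and the boundary term `(1 - cos (nt)) / n²` takes its place.
-/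

open Polynomial.Chebyshev

lemma sum_range_two_mul_add_one {M : Type*} [AddCommMonoid M] (f : ℕ → M) (n : ℕ) :
    ∑ m ∈ Finset.range (2 * n + 1), f m =
      ∑ k ∈ Finset.range (n + 1), f (2 * k) + ∑ k ∈ Finset.range n, f (2 * k + 1) := by
  induction n with
  | zero => simp
  | succ n ih =>
    rw [show 2 * (n + 1) + 1 = 2 * n + 1 + 1 + 1 by ring, Finset.sum_range_succ,
      Finset.sum_range_succ, ih, Finset.sum_range_succ (fun k ↦ f (2 * k)) (n + 1),
      Finset.sum_range_succ (fun k ↦ f (2 * k + 1)) n, show 2 * (n + 1) = 2 * n + 1 + 1 by ring]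
    abel

lemma add_pow_two_mul_add_sub_pow_two_mul {R : Type*} [CommRing R] (x y : R) (n : ℕ) :
    (x + y) ^ (2 * n) + (x - y) ^ (2 * n) =
      2 * ∑ k ∈ Finset.range (n + 1), (2 * n).choose (2 * k) * (y ^ 2) ^ k * (x ^ 2) ^ (n - k) := by
  have odd_cancel (k : ℕ) : y ^ (2 * k + 1) + (-y) ^ (2 * k + 1) = 0 := by
    rw [(odd_two_mul_add_one k).neg_pow, add_neg_cancel]
  have even_double (k : ℕ) : y ^ (2 * k) + (-y) ^ (2 * k) = 2 * (y ^ 2) ^ k := by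
    rw [(even_two_mul k).neg_pow, ← two_mul, pow_mul]
  rw [sub_eq_add_neg, add_comm x, add_comm x, add_pow, add_pow, ← Finset.sum_add_distrib]
  simp only [← add_mul]
  rw [sum_range_two_mul_add_one]
  simp only [odd_cancel, even_double, zero_mul, Finset.sum_const_zero, add_zero, Finset.mul_sum]
  refine Finset.sum_congr rfl fun k _ ↦ ?_
  rw [← Nat.mul_sub, pow_mul]
  ring

lemma two_mul_cos_nat_mul (n : ℕ) (z : ℂ) :
    2 * Complex.cos (n * z) =
      (Complex.cos z + Complex.sin z * Complex.I) ^ n +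
        (Complex.cos z - Complex.sin z * Complex.I) ^ n := by
  have cos_sub_sin := Complex.cos_add_sin_mul_I_pow n (-z)
  rw [mul_neg, Complex.cos_neg, Complex.sin_neg, Complex.cos_neg, Complex.sin_neg, neg_mul,
    neg_mul, ← sub_eq_add_neg, ← sub_eq_add_neg] at cos_sub_sin
  rw [Complex.cos_add_sin_mul_I_pow, cos_sub_sin]
  ring

lemma chebyshevT_eval_cos_two_mul_eq_sum (n : ℕ) (w : ℂ) :
    (T ℂ n).eval (Complex.cos (2 * w)) =
      ∑ k ∈ Finset.range (n + 1), (2 * n).choose (2 * k) *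
        ((Complex.sin w * Complex.I) ^ 2) ^ k * (Complex.cos w ^ 2) ^ (n - k) := by
  have frequency : ((n : ℤ) : ℂ) * (2 * w) = (2 * n : ℕ) * w := by push_cast; ring
  rw [T_complex_cos, frequency]
  apply mul_left_cancel₀ (two_ne_zero' ℂ)
  rw [two_mul_cos_nat_mul, add_pow_two_mul_add_sub_pow_two_mul]

lemma chebyshevT_eval_eq_sum (n : ℕ) (x : ℝ) :
    (T ℝ n).eval x = ∑ k ∈ Finset.range (n + 1),
      (2 * n).choose (2 * k) * ((x - 1) / 2) ^ k * ((x + 1) / 2) ^ (n - k) := by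
  obtain ⟨z, hz⟩ := Complex.cos_surjective x
  have hx : (x : ℂ) = Complex.cos (2 * (z / 2)) := by rw [mul_div_cancel₀ z two_ne_zero, hz]
  have sin_sq : ((x : ℂ) - 1) / 2 = (Complex.sin (z / 2) * Complex.I) ^ 2 := by
    rw [hx, mul_pow, Complex.I_sq, Complex.sin_sq, Complex.cos_two_mul]
    ring
  have cos_sq : ((x : ℂ) + 1) / 2 = Complex.cos (z / 2) ^ 2 := by
    rw [hx, Complex.cos_two_mul]
    ring
  apply Complex.ofReal_injective
  rw [complex_ofReal_eval_T]
  push_cast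
  rw [sin_sq, cos_sq, hx, chebyshevT_eval_cos_two_mul_eq_sum]

lemma Gamma_natCast_add_half_eq_centralBinom (k : ℕ) :
    Gamma (k + 1 / 2) = k.centralBinom * k.factorial * √π / 4 ^ k := by
  induction k with
  | zero => simpa using Gamma_one_half_eq
  | succ k ih =>
    have centralBinom_succ : ((k : ℝ) + 1) * (k + 1).centralBinom =
        2 * (2 * k + 1) * k.centralBinom := mod_cast k.succ_mul_centralBinom_succ
    rw [show ((k + 1 : ℕ) : ℝ) + 1 / 2 = k + 1 / 2 + 1 by push_cast; ring,
      Gamma_add_one (by positivity), ih, Nat.factorial_succ]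
    push_cast
    linear_combination -(k.factorial * √π / 4 ^ (k + 1)) * centralBinom_succ

lemma genBinom_natCast_sub_half {n k : ℕ} (hk : k ≤ n) :
    genBinom (n - 1 / 2) k =
      n.centralBinom * n.choose k / (4 ^ k * (n - k).centralBinom) := by
  obtain ⟨m, rfl⟩ := Nat.exists_eq_add_of_le hk
  have hcb : (m.centralBinom : ℝ) ≠ 0 := mod_cast m.centralBinom_ne_zero
  rw [genBinom, show ((k + m : ℕ) : ℝ) - 1 / 2 + 1 = (k + m : ℕ) + 1 / 2 by ring,
    show ((k + m : ℕ) : ℝ) - 1 / 2 - k + 1 = m + 1 / 2 by push_cast; ring,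
    Gamma_natCast_add_half_eq_centralBinom, Gamma_natCast_add_half_eq_centralBinom,
    Gamma_nat_eq_factorial, Nat.cast_choose ℝ hk, Nat.add_sub_cancel_left, pow_add]
  field_simp

lemma choose_two_mul_mul_centralBinom {n k : ℕ} (hk : k ≤ n) :
    (2 * n).choose (2 * k) * (k.centralBinom * (n - k).centralBinom) =
      n.centralBinom * n.choose k ^ 2 := by
  obtain ⟨m, rfl⟩ := Nat.exists_eq_add_of_le hk
  simp only [Nat.centralBinom_eq_two_mul_choose, Nat.add_sub_cancel_left]
  apply Nat.cast_injective (R := ℚ)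
  push_cast
  rw [Nat.cast_choose ℚ (show 2 * k ≤ 2 * (k + m) by lia), Nat.cast_choose ℚ hk,
    Nat.cast_choose ℚ (show k ≤ 2 * k by lia), Nat.cast_choose ℚ (show m ≤ 2 * m by lia),
    Nat.cast_choose ℚ (show k + m ≤ 2 * (k + m) by lia), ← Nat.mul_sub, Nat.add_sub_cancel_left,
    two_mul k, two_mul m, two_mul (k + m), Nat.add_sub_cancel, Nat.add_sub_cancel,
    Nat.add_sub_cancel]
  field_simp

lemma genBinom_mul_genBinom_natCast_sub_half {n k : ℕ} (hk : k ≤ n) :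
    genBinom (n - 1 / 2) (n - k) * genBinom (n - 1 / 2) k =
      n.centralBinom / 4 ^ n * (2 * n).choose (2 * k) := by
  have hcb_left : (k.centralBinom : ℝ) ≠ 0 := mod_cast k.centralBinom_ne_zero
  have hcb_right : ((n - k).centralBinom : ℝ) ≠ 0 := mod_cast (n - k).centralBinom_ne_zero
  have choose_identity :
      ((2 * n).choose (2 * k) : ℝ) * (k.centralBinom * (n - k).centralBinom) =
        n.centralBinom * n.choose k ^ 2 := mod_cast choose_two_mul_mul_centralBinom hk
  rw [← Nat.cast_sub hk, genBinom_natCast_sub_half (Nat.sub_le n k),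
    genBinom_natCast_sub_half hk, Nat.sub_sub_self hk, Nat.choose_symm hk,
    eq_div_of_mul_eq (mul_ne_zero hcb_left hcb_right) choose_identity,
    ← Nat.sub_add_cancel hk, pow_add, Nat.sub_add_cancel hk]
  field_simp

theorem jacobiP_neg_half_neg_half (n : ℕ) (x : ℝ) :
    jacobiP n (-1 / 2) (-1 / 2) x = n.centralBinom / 4 ^ n * (T ℝ n).eval x := by
  rw [jacobiP, chebyshevT_eval_eq_sum, Finset.mul_sum]
  refine Finset.sum_congr rfl fun k hk ↦ ?_
  rw [show (n : ℝ) + -1 / 2 = n - 1 / 2 by ring,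
    genBinom_mul_genBinom_natCast_sub_half (Finset.mem_range_succ_iff.mp hk)]
  ring

theorem FJ_zero_zero_eq_integral_cos (n : ℕ) (δ t : ℝ) :
    FJ n 0 0 δ t =
      n.centralBinom / 4 ^ n * ∫ θ in (0 : ℝ)..t, (t - θ) ^ δ * cos (n * θ) := by
  rw [FJ, ← intervalIntegral.integral_const_mul]
  congr 1 with θ
  rw [show (0 : ℝ) - 1 / 2 = -1 / 2 by ring, jacobiP_neg_half_neg_half, T_real_cos, mul_zero,
    rpow_zero, rpow_zero]
  push_cast
  ring

section FractionalIntegral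

variable {p t : ℝ}

lemma continuous_const_sub_rpow (hp : 0 ≤ p) : Continuous fun x : ℝ ↦ (t - x) ^ p :=
  (continuous_const.sub continuous_id).rpow_const fun _ ↦ Or.inr hp

lemma hasDerivAt_const_sub_rpow {x : ℝ} (hx : x < t) :
    HasDerivAt (fun y ↦ (t - y) ^ p) (-(p * (t - x) ^ (p - 1))) x := by
  have h := ((hasDerivAt_id' x).const_sub t).rpow_const (p := p) (Or.inl (sub_pos.mpr hx).ne')
  rwa [neg_one_mul, neg_mul] at h

-- For `0 < p < 1` the integrand blows up at `t`; it is integrable because it is the derivative of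
-- the monotone function `-(t - x) ^ p`.
lemma intervalIntegrable_mul_const_sub_rpow_sub_one (hp : 0 ≤ p) (ht : 0 ≤ t) :
    IntervalIntegrable (fun x ↦ p * (t - x) ^ (p - 1)) volume 0 t := by
  refine intervalIntegral.intervalIntegrable_deriv_of_nonneg (g := fun x ↦ -(t - x) ^ p)
    (continuous_const_sub_rpow hp).neg.continuousOn ?_ ?_
  all_goals
    rw [min_eq_left ht, max_eq_right ht]
    intro x hx
  · simpa only [neg_neg] using (hasDerivAt_const_sub_rpow (p := p) hx.2).fun_neg
  · exact mul_nonneg hp (rpow_nonneg (sub_nonneg.mpr hx.2.le) _)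

lemma integral_const_sub_rpow_mul_deriv (hp : 0 ≤ p) (ht : 0 ≤ t) {v v' : ℝ → ℝ}
    (hvv' : ∀ x, HasDerivAt v (v' x) x) (hv' : IntervalIntegrable v' volume 0 t) :
    ∫ x in (0 : ℝ)..t, (t - x) ^ p * v' x =
      (0 : ℝ) ^ p * v t - t ^ p * v 0 + p * ∫ x in (0 : ℝ)..t, (t - x) ^ (p - 1) * v x := by
  rw [intervalIntegral.integral_mul_deriv_eq_deriv_mul_of_hasDerivAt
    (continuous_const_sub_rpow hp).continuousOn
    (fun x _ ↦ (hvv' x).continuousAt.continuousWithinAt)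
    (fun x hx ↦ hasDerivAt_const_sub_rpow (max_eq_right ht ▸ hx.2)) (fun x _ ↦ hvv' x)
    (intervalIntegrable_mul_const_sub_rpow_sub_one hp ht).neg hv']
  simp only [neg_mul, mul_assoc, intervalIntegral.integral_neg,
    intervalIntegral.integral_const_mul, sub_self, sub_zero, sub_neg_eq_add]

lemma mul_integral_const_sub_rpow_mul_sin_nonneg (hp : 0 ≤ p) (ht : 0 ≤ t) (ω : ℝ) :
    0 ≤ ω * ∫ x in (0 : ℝ)..t, (t - x) ^ p * sin (ω * x) := by
  have hv (x : ℝ) : HasDerivAt (fun x ↦ 1 - cos (ω * x)) (ω * sin (ω * x)) x :=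
    ((hasDerivAt_const_mul ω).cos.const_sub 1).congr_deriv (by ring)
  have one_sub_cos_nonneg (x : ℝ) : 0 ≤ 1 - cos (ω * x) := sub_nonneg.mpr (cos_le_one _)
  calc
    0 ≤ (0 : ℝ) ^ p * (1 - cos (ω * t)) +
        p * ∫ x in (0 : ℝ)..t, (t - x) ^ (p - 1) * (1 - cos (ω * x)) :=
      add_nonneg (mul_nonneg (rpow_nonneg le_rfl p) (one_sub_cos_nonneg t)) <|
        mul_nonneg hp <| intervalIntegral.integral_nonneg ht fun x hx ↦
          mul_nonneg (rpow_nonneg (sub_nonneg.mpr hx.2) _) (one_sub_cos_nonneg x)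
    _ = ∫ x in (0 : ℝ)..t, (t - x) ^ p * (ω * sin (ω * x)) := by
      rw [integral_const_sub_rpow_mul_deriv hp ht hv
        (Continuous.intervalIntegrable (by fun_prop) 0 t)]
      simp
    _ = ω * ∫ x in (0 : ℝ)..t, (t - x) ^ p * sin (ω * x) := by
      simp only [← intervalIntegral.integral_const_mul, mul_left_comm ω]

lemma mul_integral_const_sub_rpow_mul_cos (hp : 0 < p) (ht : 0 ≤ t) (ω : ℝ) :
    ω * ∫ x in (0 : ℝ)..t, (t - x) ^ p * cos (ω * x) =
      p * ∫ x in (0 : ℝ)..t, (t - x) ^ (p - 1) * sin (ω * x) := by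
  have hv (x : ℝ) : HasDerivAt (fun x ↦ sin (ω * x)) (ω * cos (ω * x)) x :=
    (hasDerivAt_const_mul ω).sin.congr_deriv (mul_comm _ _)
  calc
    ω * ∫ x in (0 : ℝ)..t, (t - x) ^ p * cos (ω * x)
    _ = ∫ x in (0 : ℝ)..t, (t - x) ^ p * (ω * cos (ω * x)) := by
      simp only [← intervalIntegral.integral_const_mul, mul_left_comm ω]
    _ = p * ∫ x in (0 : ℝ)..t, (t - x) ^ (p - 1) * sin (ω * x) := by
      rw [integral_const_sub_rpow_mul_deriv hp.le ht hv
        (Continuous.intervalIntegrable (by fun_prop) 0 t), zero_rpow hp.ne']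
      simp

theorem integral_const_sub_rpow_mul_cos_nonneg (hp : 1 ≤ p) (ht : 0 ≤ t) (ω : ℝ) :
    0 ≤ ∫ x in (0 : ℝ)..t, (t - x) ^ p * cos (ω * x) := by
  rcases eq_or_ne ω 0 with rfl | hω
  · refine intervalIntegral.integral_nonneg ht fun x hx ↦ ?_
    rw [zero_mul, cos_zero, mul_one]
    exact rpow_nonneg (sub_nonneg.mpr hx.2) p
  · have hp_pos : 0 < p := one_pos.trans_le hp
    refine nonneg_of_mul_nonneg_right ?_ (sq_pos_of_ne_zero hω)
    rw [sq, mul_assoc, mul_integral_const_sub_rpow_mul_cos hp_pos ht, mul_left_comm]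
    exact mul_nonneg hp_pos.le
      (mul_integral_const_sub_rpow_mul_sin_nonneg (sub_nonneg.mpr hp) ht ω)

end FractionalIntegral

theorem FJ_zero_zero_nonneg_general {δ : ℝ} (hδ : 1 ≤ δ) (n : ℕ) {t : ℝ} (ht : 0 ≤ t) :
    0 ≤ FJ n 0 0 δ t := by
  rw [FJ_zero_zero_eq_integral_cos]
  exact mul_nonneg (by positivity) (integral_const_sub_rpow_mul_cos_nonneg hδ ht n)

theorem FJ_zero_zero_nonneg (δ : ℝ) (hδ : 1 ≤ δ) (n : ℕ) (t : ℝ)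
    (ht : t ∈ Set.Ioc (0:ℝ) π) :
    0 ≤ FJ n 0 0 δ t :=
  FJ_zero_zero_nonneg_general hδ n ht.1.le
end

section
/- Let λ ∈ ℕ with λ ≥ 1, and let δ be a real number with δ ≥ λ + 1. Then for every n ∈ ℕ (n ≥ 0) and every t ∈ (0, π], the integral F_n^{λ,δ}(t) = ∫_0^t (t-θ)^δ C_n^λ(cos θ) (sin θ)^{2λ} dθ is strictly positive. -/
open MeasureTheory Real Set

/-- Pochhammer symbol `(a)_n = a (a+1) ⋯ (a+n-1)`. -/
noncomputable def poch (a : ℝ) (n : ℕ) : ℝ := Polynomial.eval a (ascPochhammer ℝ n)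

/-- Gegenbauer polynomial `C_n^λ(x) = ((2λ)_n/(λ+1/2)_n) P_n^{(λ-1/2,λ-1/2)}(x)`. -/
noncomputable def gegenbauerC (n : ℕ) (lam x : ℝ) : ℝ :=
  (poch (2 * lam) n / poch (lam + 1/2) n) * jacobiP n (lam - 1/2) (lam - 1/2) x

/-- `F_n^{λ,δ}(t) = ∫_0^t (t-θ)^δ C_n^λ(cos θ) (sin θ)^{2λ} dθ`. -/
noncomputable def FG (n : ℕ) (lam δ t : ℝ) : ℝ :=
  ∫ θ in (0:ℝ)..t, (t - θ) ^ δ * gegenbauerC n lam (Real.cos θ) * (Real.sin θ) ^ (2 * lam)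

/-!
Up to a positive factor, `F_n^{λ,δ}` is the Riemann–Liouville integral `I_δ y_λ` of
`y_λ(θ) = P_n^{(λ-1/2,λ-1/2)}(cos θ) (sin θ)^{2λ}`, and these functions form a chain of driven
oscillators: `y_λ'' + (n+2λ)² y_λ = c y_{λ-1}` with `c = 4λ(n+λ-1/2) > 0`. Since `I_δ` commutes
with `d²/dt²` up to the boundary term `δ t^{δ-1} y_λ(0)`, for `λ ≥ 1` the function `I_δ y_λ` is
driven from rest by `c I_δ y_{λ-1}`, and integrating Duhamel's formula by parts gives

`I_δ y_λ(t) = ∫₀ᵗ (1 - cos(m(t-s)))/m² · c δ I_{δ-1} y_{λ-1}(s) ds`, with `m = n + 2λ`,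

whose kernel is nonnegative. Both `λ` and `δ` have dropped by one; at `λ = 0` only the boundary
term remains, and its derivative `δ(δ-1) t^{δ-2} y_0(0)` is nonnegative for `δ ≥ 1`.
-/

open Filter Topology

section Leibniz

variable {E : Type*} [NormedAddCommGroup E] [NormedSpace ℝ E] {F F' : ℝ → ℝ → E}

theorem hasDerivAt_integral_param_of_continuous (hF : ∀ x, Continuous (F x))
    (hderiv : ∀ x r, HasDerivAt (F · r) (F' x r) x) (hF' : Continuous (Function.uncurry F'))
    (a b t : ℝ) :
    HasDerivAt (fun x ↦ ∫ r in a..b, F x r) (∫ r in a..b, F' t r) t := by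
  obtain ⟨C, hC⟩ : ∃ C, ∀ p ∈ Icc (t - 1) (t + 1) ×ˢ uIcc a b, ‖Function.uncurry F' p‖ ≤ C :=
    (isCompact_Icc.prod isCompact_uIcc).exists_bound_of_continuousOn hF'.continuousOn
  exact (intervalIntegral.hasDerivAt_integral_of_dominated_loc_of_deriv_le (bound := fun _ ↦ C)
    (Icc_mem_nhds (by linarith) (by linarith))
    (.of_forall fun x ↦ (hF x).aestronglyMeasurable)
    ((hF t).intervalIntegrable _ _)
    (by fun_prop)
    (.of_forall fun r hr x hx ↦ hC (x, r) ⟨hx, uIoc_subset_uIcc hr⟩)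
    intervalIntegrable_const
    (.of_forall fun r _ x _ ↦ hderiv x r)).2

theorem hasDerivAt_integral_diagonal [CompleteSpace E] (hF : Continuous (Function.uncurry F))
    (t : ℝ) : HasDerivAt (fun x ↦ ∫ r in t..x, F x r) (F t t) t := by
  rw [hasDerivAt_iff_isLittleO, Asymptotics.isLittleO_iff]
  intro ε hε
  obtain ⟨d, hd, hclose⟩ := Metric.continuousAt_iff.1 (hF.continuousAt (x := (t, t))) ε hε
  filter_upwards [Metric.ball_mem_nhds t hd] with x hx
  have hint : (∫ r in t..x, F x r) - (∫ r in t..t, F t r) - (x - t) • F t t =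
      ∫ r in t..x, (F x r - F t t) := by
    rw [intervalIntegral.integral_sub (Continuous.intervalIntegrable (by fun_prop) _ _)
      intervalIntegrable_const, intervalIntegral.integral_same, intervalIntegral.integral_const,
      sub_zero]
  rw [hint]
  refine intervalIntegral.norm_integral_le_of_norm_le_const fun r hr ↦ ?_
  have hr' : dist r t < d := by
    refine lt_of_le_of_lt ?_ hx
    simpa only [Real.dist_eq] using abs_sub_left_of_mem_uIcc (uIoc_subset_uIcc hr)
  simpa only [Function.uncurry_apply_pair, dist_eq_norm] using
    (hclose (x := (x, r)) (max_lt hx hr')).le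

theorem hasDerivAt_integral_leibniz [CompleteSpace E] (hF : Continuous (Function.uncurry F))
    (hderiv : ∀ x r, HasDerivAt (F · r) (F' x r) x) (hF' : Continuous (Function.uncurry F'))
    (a t : ℝ) :
    HasDerivAt (fun x ↦ ∫ r in a..x, F x r) (F t t + ∫ r in a..t, F' t r) t := by
  have hFx : ∀ x, Continuous (F x) := fun x ↦ by fun_prop
  have hsplit : (fun x ↦ ∫ r in a..x, F x r) =
      fun x ↦ (∫ r in t..x, F x r) + ∫ r in a..t, F x r := by
    funext x
    rw [add_comm, intervalIntegral.integral_add_adjacent_intervals] <;>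
      exact (hFx x).intervalIntegrable _ _
  rw [hsplit]
  exact (hasDerivAt_integral_diagonal hF t).add
    (hasDerivAt_integral_param_of_continuous hFx hderiv hF' a t t)

end Leibniz

/-- The Riemann–Liouville fractional integral `∫₀ᵗ (t - θ)^δ g(θ) dθ` of order `δ + 1`, without the
customary factor `1 / Γ(δ + 1)`. -/
noncomputable def riemannLiouville (δ : ℝ) (g : ℝ → ℝ) (t : ℝ) : ℝ :=
  ∫ θ in (0 : ℝ)..t, (t - θ) ^ δ * g θ

section RiemannLiouville

variable {δ : ℝ} {g : ℝ → ℝ}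

theorem continuous_sub_rpow (hδ : 0 ≤ δ) (t : ℝ) : Continuous fun θ : ℝ ↦ (t - θ) ^ δ :=
  (continuous_rpow_const hδ).comp (continuous_const.sub continuous_id)

theorem riemannLiouville_at_zero (δ : ℝ) (g : ℝ → ℝ) : riemannLiouville δ g 0 = 0 :=
  intervalIntegral.integral_same

theorem riemannLiouville_const_mul (δ c : ℝ) (g : ℝ → ℝ) (t : ℝ) :
    riemannLiouville δ (fun θ ↦ c * g θ) t = c * riemannLiouville δ g t := by
  simp only [riemannLiouville, mul_left_comm _ c, intervalIntegral.integral_const_mul]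

theorem riemannLiouville_sub {h : ℝ → ℝ} (hδ : 0 ≤ δ) (hh : Continuous h)
    (hg : Continuous g) (t : ℝ) :
    riemannLiouville δ (fun θ ↦ h θ - g θ) t =
      riemannLiouville δ h t - riemannLiouville δ g t := by
  have hk := continuous_sub_rpow hδ t
  simp only [riemannLiouville, mul_sub]
  exact intervalIntegral.integral_sub ((hk.mul hh).intervalIntegrable _ _)
    ((hk.mul hg).intervalIntegrable _ _)

theorem riemannLiouville_eq_integral_comp_sub (δ : ℝ) (g : ℝ → ℝ) (t : ℝ) :
    riemannLiouville δ g t = ∫ r in (0 : ℝ)..t, r ^ δ * g (t - r) := by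
  simpa [riemannLiouville] using
    intervalIntegral.integral_comp_sub_left (a := 0) (b := t) (fun r ↦ r ^ δ * g (t - r)) t

theorem hasDerivAt_riemannLiouville_of_contDiff (hδ : 0 ≤ δ) (hg : ContDiff ℝ 1 g) (t : ℝ) :
    HasDerivAt (riemannLiouville δ g) (t ^ δ * g 0 + riemannLiouville δ (deriv g) t) t := by
  have : Continuous (deriv g) := hg.continuous_deriv_one
  have : Continuous fun r : ℝ ↦ r ^ δ := continuous_rpow_const hδ
  rw [funext (riemannLiouville_eq_integral_comp_sub δ g), riemannLiouville_eq_integral_comp_sub]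
  have h := hasDerivAt_integral_leibniz (F := fun x r ↦ r ^ δ * g (x - r))
    (F' := fun x r ↦ r ^ δ * deriv g (x - r)) (by fun_prop) (fun x r ↦ ?_) (by fun_prop) 0 t
  · rwa [sub_self] at h
  · exact ((hg.differentiable_one (x - r)).hasDerivAt.comp_sub_const x r).const_mul _

theorem hasDerivAt_riemannLiouville_of_one_le (hδ : 1 ≤ δ) (hg : Continuous g) (t : ℝ) :
    HasDerivAt (riemannLiouville δ g) (δ * riemannLiouville (δ - 1) g t) t := by
  have hpow : Continuous fun r : ℝ ↦ r ^ δ := continuous_rpow_const (by linarith)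
  have hpow' : Continuous fun r : ℝ ↦ r ^ (δ - 1) := continuous_rpow_const (by linarith)
  have h := hasDerivAt_integral_leibniz (F := fun x θ ↦ (x - θ) ^ δ * g θ)
    (F' := fun x θ ↦ δ * ((x - θ) ^ (δ - 1) * g θ)) (by fun_prop) (fun x θ ↦ ?_) (by fun_prop) 0 t
  · refine h.congr_deriv ?_
    rw [sub_self, zero_rpow (by linarith), zero_mul, zero_add, intervalIntegral.integral_const_mul]
    rfl
  · exact (((hasDerivAt_rpow_const (Or.inr hδ)).comp_sub_const x θ).mul_const (g θ)).congr_deriv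
      (mul_assoc _ _ _)

theorem eventually_riemannLiouville_pos (hδ : 0 ≤ δ) (hg : Continuous g) (hg0 : 0 < g 0) :
    ∀ᶠ t in 𝓝[>] 0, 0 < riemannLiouville δ g t := by
  obtain ⟨ε, hε, hpos⟩ := Metric.eventually_nhds_iff.1 (hg.continuousAt.eventually_const_lt hg0)
  filter_upwards [Ioo_mem_nhdsGT hε] with t ht
  refine intervalIntegral.intervalIntegral_pos_of_pos_on
    (((continuous_sub_rpow hδ t).mul hg).intervalIntegrable _ _) (fun θ hθ ↦ ?_) ht.1
  refine mul_pos (rpow_pos_of_pos (sub_pos.2 hθ.2) δ) (hpos ?_)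
  rw [Real.dist_eq, sub_zero, abs_of_pos hθ.1]
  exact hθ.2.trans ht.2

end RiemannLiouville

/-- The solution of `ψ'' + m² ψ = 1` with `ψ(0) = ψ'(0) = 0`. -/
noncomputable def stepResponse (m x : ℝ) : ℝ :=
  if m = 0 then x ^ 2 / 2 else (1 - cos (m * x)) / m ^ 2

/-- The solution of `S'' + m² S = 0` with `S(0) = 0` and `S'(0) = 1`, which is the derivative of
`stepResponse m`. -/
noncomputable def impulseResponse (m x : ℝ) : ℝ :=
  if m = 0 then x else sin (m * x) / m

section Responses

variable (m : ℝ)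

theorem stepResponse_at_zero : stepResponse m 0 = 0 := by simp [stepResponse]

theorem impulseResponse_at_zero : impulseResponse m 0 = 0 := by simp [impulseResponse]

theorem stepResponse_nonneg (x : ℝ) : 0 ≤ stepResponse m x := by
  unfold stepResponse
  split_ifs with hm
  · positivity
  · exact div_nonneg (sub_nonneg.2 (cos_le_one _)) (sq_nonneg m)

theorem hasDerivAt_stepResponse (x : ℝ) :
    HasDerivAt (stepResponse m) (impulseResponse m x) x := by
  unfold stepResponse impulseResponse
  split_ifs with hm
  · simpa using (hasDerivAt_pow 2 x).div_const 2
  · refine ((((hasDerivAt_id' x).const_mul m).cos.const_sub 1).div_const (m ^ 2)).congr_deriv ?_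
    field_simp

theorem hasDerivAt_impulseResponse (x : ℝ) :
    HasDerivAt (impulseResponse m) (1 - m ^ 2 * stepResponse m x) x := by
  unfold stepResponse impulseResponse
  split_ifs with hm
  · simpa [hm] using hasDerivAt_id' x
  · refine (((hasDerivAt_id' x).const_mul m).sin.div_const m).congr_deriv ?_
    field_simp
    ring

theorem dense_stepResponse_ne_zero : Dense {x | stepResponse m x ≠ 0} := by
  refine interior_eq_empty_iff_dense_compl.1 (eq_empty_iff_forall_notMem.2 fun x hx ↦ ?_)
  have hψ : stepResponse m =ᶠ[𝓝 x] fun _ ↦ 0 := mem_interior_iff_mem_nhds.1 hx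
  have hS : impulseResponse m =ᶠ[𝓝 x] fun _ ↦ 0 := by
    filter_upwards [hψ.eventuallyEq_nhds] with y hy
    exact (hasDerivAt_stepResponse m y).unique ((hasDerivAt_const y 0).congr_of_eventuallyEq hy)
  have hS' := (hasDerivAt_impulseResponse m x).unique
    ((hasDerivAt_const x 0).congr_of_eventuallyEq hS)
  simp [hψ.eq_of_nhds] at hS'

end Responses

/-- `f` is the motion `f'' + m² f = r` of a harmonic oscillator of frequency `m` which is driven by
the force `r` and starts at rest, `f(0) = f'(0) = 0`. -/
structure IsDrivenFromRest (m : ℝ) (r f : ℝ → ℝ) : Prop where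
  differentiable : Differentiable ℝ f
  hasDerivAt_deriv (x : ℝ) : HasDerivAt (deriv f) (r x - m ^ 2 * f x) x
  at_zero : f 0 = 0
  deriv_at_zero : deriv f 0 = 0

/-- The function of `s` which joins `stepResponse m t * r 0` at `s = 0` to `f t` at `s = t` and has
derivative `stepResponse m (t - s) * r' s` if `f'' + m² f = r`: integrating it gives Duhamel's
formula. -/
noncomputable def duhamelPrimitive (m : ℝ) (r f : ℝ → ℝ) (t s : ℝ) : ℝ :=
  stepResponse m (t - s) * (r s - m ^ 2 * f s) + impulseResponse m (t - s) * deriv f s + f s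

theorem duhamelPrimitive_self (m : ℝ) (r f : ℝ → ℝ) (t : ℝ) :
    duhamelPrimitive m r f t t = f t := by
  simp [duhamelPrimitive, stepResponse_at_zero, impulseResponse_at_zero]

namespace IsDrivenFromRest

variable {m t : ℝ} {r r' f : ℝ → ℝ}

theorem duhamelPrimitive_zero (h : IsDrivenFromRest m r f) (t : ℝ) :
    duhamelPrimitive m r f t 0 = stepResponse m t * r 0 := by
  simp [duhamelPrimitive, h.at_zero, h.deriv_at_zero]

theorem hasDerivAt_duhamelPrimitive (h : IsDrivenFromRest m r f) {s ρ : ℝ}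
    (hr : HasDerivAt r ρ s) (t : ℝ) :
    HasDerivAt (duhamelPrimitive m r f t) (stepResponse m (t - s) * ρ) s := by
  have hψ := (hasDerivAt_stepResponse m (t - s)).comp_const_sub t s
  have hS := (hasDerivAt_impulseResponse m (t - s)).comp_const_sub t s
  have hf := (h.differentiable s).hasDerivAt
  refine (((hψ.mul (hr.sub (hf.const_mul (m ^ 2)))).add (hS.mul (h.hasDerivAt_deriv s))).add
    hf).congr_deriv ?_
  simp only [Pi.sub_apply]
  ring

theorem continuous_duhamelPrimitive (h : IsDrivenFromRest m r f) (hr : Continuous r) (t : ℝ) :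
    Continuous (duhamelPrimitive m r f t) := by
  have : Continuous f := h.differentiable.continuous
  have : Continuous (deriv f) :=
    continuous_iff_continuousAt.2 fun x ↦ (h.hasDerivAt_deriv x).continuousAt
  have : Continuous (stepResponse m) :=
    continuous_iff_continuousAt.2 fun x ↦ (hasDerivAt_stepResponse m x).continuousAt
  have : Continuous (impulseResponse m) :=
    continuous_iff_continuousAt.2 fun x ↦ (hasDerivAt_impulseResponse m x).continuousAt
  unfold duhamelPrimitive
  fun_prop

theorem monotoneOn_duhamelPrimitive (h : IsDrivenFromRest m r f) (hr : Continuous r)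
    (hr' : ∀ x > 0, HasDerivAt r (r' x) x) (hr'_nonneg : ∀ x > 0, 0 ≤ r' x) (t : ℝ) :
    MonotoneOn (duhamelPrimitive m r f t) (Ici 0) := by
  refine monotoneOn_of_hasDerivWithinAt_nonneg (convex_Ici 0)
    (h.continuous_duhamelPrimitive hr t).continuousOn
    (f' := fun s ↦ stepResponse m (t - s) * r' s) ?_ ?_ <;> rw [interior_Ici] <;> intro s hs
  · exact (h.hasDerivAt_duhamelPrimitive (hr' s hs) t).hasDerivWithinAt
  · exact mul_nonneg (stepResponse_nonneg m _) (hr'_nonneg s hs)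

theorem nonneg (h : IsDrivenFromRest m r f) (hr : Continuous r)
    (hr' : ∀ x > 0, HasDerivAt r (r' x) x) (hr'_nonneg : ∀ x > 0, 0 ≤ r' x) (hr0 : 0 ≤ r 0)
    (ht : 0 ≤ t) : 0 ≤ f t :=
  calc
    0 ≤ stepResponse m t * r 0 := mul_nonneg (stepResponse_nonneg m t) hr0
    _ = duhamelPrimitive m r f t 0 := (h.duhamelPrimitive_zero t).symm
    _ ≤ duhamelPrimitive m r f t t :=
      h.monotoneOn_duhamelPrimitive hr hr' hr'_nonneg t self_mem_Ici ht ht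
    _ = f t := duhamelPrimitive_self m r f t

theorem pos (h : IsDrivenFromRest m r f) (hr : Continuous r)
    (hr' : ∀ x > 0, HasDerivAt r (r' x) x) (hr'_nonneg : ∀ x > 0, 0 ≤ r' x)
    (hr'_pos : ∀ᶠ x in 𝓝[>] 0, 0 < r' x) (hr0 : 0 ≤ r 0) (ht : 0 < t) : 0 < f t := by
  refine (h.nonneg hr hr' hr'_nonneg hr0 ht.le).lt_of_ne' fun hft ↦ ?_
  have hmono := h.monotoneOn_duhamelPrimitive hr hr' hr'_nonneg t
  -- `f t = 0` squeezes the monotone primitive to `0`, so its derivative vanishes on `(0, t)`.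
  have hconst : ∀ s ∈ Icc 0 t, duhamelPrimitive m r f t s = 0 := fun s hs ↦ by
    have hleft := hmono self_mem_Ici hs.1 hs.1
    have hright := hmono hs.1 ht.le hs.2
    rw [h.duhamelPrimitive_zero] at hleft
    rw [duhamelPrimitive_self, hft] at hright
    exact hright.antisymm ((mul_nonneg (stepResponse_nonneg m t) hr0).trans hleft)
  obtain ⟨ε, hε, hpos⟩ := (nhdsGT_basis (0 : ℝ)).eventually_iff.1 hr'_pos
  obtain ⟨y, hy, hψ⟩ := (dense_stepResponse_ne_zero m).exists_mem_open isOpen_Ioo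
    (nonempty_Ioo.2 (sub_lt_self t (lt_min hε ht)))
  obtain ⟨s, rfl⟩ : ∃ s, y = t - s := ⟨t - y, by ring⟩
  have hs : 0 < s := by linarith [hψ.2]
  have hsmin : s < min ε t := by linarith [hψ.1]
  have hzero : duhamelPrimitive m r f t =ᶠ[𝓝 s] fun _ ↦ 0 := by
    filter_upwards [Icc_mem_nhds hs (hsmin.trans_le (min_le_right _ _))] using hconst
  have hderiv := (h.hasDerivAt_duhamelPrimitive (hr' s hs) t).unique
    ((hasDerivAt_const s 0).congr_of_eventuallyEq hzero)
  exact mul_ne_zero hy (hpos ⟨hs, hsmin.trans_le (min_le_left _ _)⟩).ne' hderiv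

end IsDrivenFromRest

/-- If `g'' + m² g = h` and `g'(0) = 0`, then this force drives `riemannLiouville δ g` from rest.
The first term is the boundary contribution of `g(0)`, with the convention `0 ^ 0 = 1` if `δ = 1`.
-/
noncomputable def fractionalForce (δ : ℝ) (g h : ℝ → ℝ) (t : ℝ) : ℝ :=
  δ * t ^ (δ - 1) * g 0 + riemannLiouville δ h t

section FractionalForce

variable {δ m t : ℝ} {g h : ℝ → ℝ}

theorem continuous_fractionalForce (hδ : 1 ≤ δ) (hh : Continuous h) :
    Continuous (fractionalForce δ g h) := by
  have : Continuous (riemannLiouville δ h) := continuous_iff_continuousAt.2 fun t ↦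
    (hasDerivAt_riemannLiouville_of_one_le hδ hh t).continuousAt
  have : Continuous fun t : ℝ ↦ t ^ (δ - 1) := continuous_rpow_const (sub_nonneg.2 hδ)
  unfold fractionalForce
  fun_prop

theorem hasDerivAt_fractionalForce (hδ : 1 ≤ δ) (hh : Continuous h) (ht : t ≠ 0) :
    HasDerivAt (fractionalForce δ g h)
      (δ * ((δ - 1) * t ^ (δ - 1 - 1)) * g 0 + δ * riemannLiouville (δ - 1) h t) t :=
  (((hasDerivAt_rpow_const (Or.inl ht)).const_mul δ).mul_const (g 0)).add
    (hasDerivAt_riemannLiouville_of_one_le hδ hh t)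

theorem isDrivenFromRest_riemannLiouville (hδ : 1 ≤ δ) (hg : ContDiff ℝ 2 g) (hh : Continuous h)
    (hode : ∀ x, iteratedDeriv 2 g x + m ^ 2 * g x = h x) (hg'0 : deriv g 0 = 0) :
    IsDrivenFromRest m (fractionalForce δ g h) (riemannLiouville δ g) := by
  have hδ0 : 0 ≤ δ := by linarith
  have hderiv := hasDerivAt_riemannLiouville_of_contDiff hδ0 (hg.of_le one_le_two)
  have hderiv_eq : deriv (riemannLiouville δ g) =
      fun t ↦ t ^ δ * g 0 + riemannLiouville δ (deriv g) t := funext fun t ↦ (hderiv t).deriv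
  have hg'' : deriv (deriv g) = fun x ↦ h x - m ^ 2 * g x := by
    funext x
    rw [← hode, iteratedDeriv_succ, iteratedDeriv_one, add_sub_cancel_right]
  refine ⟨fun t ↦ (hderiv t).differentiableAt, fun t ↦ ?_, riemannLiouville_at_zero δ g, ?_⟩
  · rw [hderiv_eq]
    refine (((hasDerivAt_rpow_const (Or.inr hδ)).mul_const (g 0)).add
      (hasDerivAt_riemannLiouville_of_contDiff hδ0 hg.deriv' t)).congr_deriv ?_
    rw [hg'0, mul_zero, zero_add, hg'', riemannLiouville_sub hδ0 hh (hg.continuous.const_mul _),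
      riemannLiouville_const_mul, fractionalForce, add_sub_assoc]
  · simp [hderiv_eq, riemannLiouville_at_zero, zero_rpow (show δ ≠ 0 by linarith)]

theorem fractionalForce_zero_nonneg (hδ : 1 ≤ δ) (hg0 : 0 ≤ g 0) : 0 ≤ fractionalForce δ g h 0 := by
  have : 0 ≤ δ := by linarith
  rw [fractionalForce, riemannLiouville_at_zero, add_zero]
  positivity

theorem riemannLiouville_nonneg_of_ode (hδ : 1 ≤ δ) (hg : ContDiff ℝ 2 g) (hh : Continuous h)
    (hode : ∀ x, iteratedDeriv 2 g x + m ^ 2 * g x = h x) (hg'0 : deriv g 0 = 0) (hg0 : 0 ≤ g 0)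
    (hnonneg : ∀ x > 0, 0 ≤ riemannLiouville (δ - 1) h x) (ht : 0 ≤ t) :
    0 ≤ riemannLiouville δ g t := by
  have : 0 ≤ δ - 1 := by linarith
  have : 0 ≤ δ := by linarith
  refine (isDrivenFromRest_riemannLiouville hδ hg hh hode hg'0).nonneg
    (continuous_fractionalForce hδ hh) (fun x hx ↦ hasDerivAt_fractionalForce hδ hh hx.ne')
    (fun x hx ↦ ?_) (fractionalForce_zero_nonneg hδ hg0) ht
  have := hnonneg x hx
  have : 0 < x := hx
  positivity

theorem riemannLiouville_pos_of_ode (hδ : 1 ≤ δ) (hg : ContDiff ℝ 2 g) (hh : Continuous h)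
    (hode : ∀ x, iteratedDeriv 2 g x + m ^ 2 * g x = h x) (hg'0 : deriv g 0 = 0) (hg0 : 0 ≤ g 0)
    (hnonneg : ∀ x > 0, 0 ≤ riemannLiouville (δ - 1) h x)
    (hpos : ∀ᶠ x in 𝓝[>] 0, 0 < riemannLiouville (δ - 1) h x) (ht : 0 < t) :
    0 < riemannLiouville δ g t := by
  have : 0 ≤ δ - 1 := by linarith
  have : 0 < δ := by linarith
  refine (isDrivenFromRest_riemannLiouville hδ hg hh hode hg'0).pos
    (continuous_fractionalForce hδ hh) (fun x hx ↦ hasDerivAt_fractionalForce hδ hh hx.ne')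
    (fun x hx ↦ ?_) ?_ (fractionalForce_zero_nonneg hδ hg0) ht
  · have := hnonneg x hx
    have : 0 < x := hx
    positivity
  · filter_upwards [hpos, self_mem_nhdsWithin] with x hx hx0
    have : 0 < x := hx0
    positivity

end FractionalForce

theorem deriv_zero_of_even {f : ℝ → ℝ} (hf : Function.Even f) : deriv f 0 = 0 := by
  have h := deriv_comp_neg f 0
  rw [show (fun x ↦ f (-x)) = f from funext hf, neg_zero] at h
  linarith

theorem sum_mul_add_mul_succ_eq_zero {R : Type*} [Semiring R] {α β : ℕ → R} {n : ℕ}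
    (h0 : α 0 = 0) (hsucc : ∀ k < n, α (k + 1) + β k = 0) (hn : β n = 0) (N : ℕ → R) :
    ∑ k ∈ Finset.range (n + 1), (α k * N k + β k * N (k + 1)) = 0 := by
  rw [Finset.sum_add_distrib, Finset.sum_range_succ' (fun k ↦ α k * N k),
    Finset.sum_range_succ (fun k ↦ β k * N (k + 1)), h0, hn, zero_mul, zero_mul, add_zero,
    add_zero, ← Finset.sum_add_distrib]
  refine Finset.sum_eq_zero fun k hk ↦ ?_
  rw [← add_mul, hsucc k (Finset.mem_range.1 hk), zero_mul]

/-- The monomial `sin(θ/2)^a cos(θ/2)^b`. -/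
noncomputable def halfAngleMonomial (a b : ℕ) (θ : ℝ) : ℝ :=
  sin (θ / 2) ^ a * cos (θ / 2) ^ b

section HalfAngle

variable (a b : ℕ) (θ : ℝ)

theorem contDiff_halfAngleMonomial {k : WithTop ℕ∞} : ContDiff ℝ k (halfAngleMonomial a b) := by
  unfold halfAngleMonomial
  fun_prop

theorem halfAngleMonomial_add_two_add_add_two :
    halfAngleMonomial (a + 2) b θ + halfAngleMonomial a (b + 2) θ = halfAngleMonomial a b θ := by
  unfold halfAngleMonomial
  linear_combination sin (θ / 2) ^ a * cos (θ / 2) ^ b * sin_sq_add_cos_sq (θ / 2)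

-- A truncated exponent `0 - 1` always comes with the coefficient `0`.
theorem hasDerivAt_halfAngleMonomial :
    HasDerivAt (halfAngleMonomial a b)
      (a / 2 * halfAngleMonomial (a - 1) (b + 1) θ -
        b / 2 * halfAngleMonomial (a + 1) (b - 1) θ) θ := by
  have h := (hasDerivAt_id' θ).div_const 2
  refine ((h.sin.pow a).mul (h.cos.pow b)).congr_deriv ?_
  simp only [halfAngleMonomial, Pi.pow_apply]
  ring

theorem iteratedDeriv_two_halfAngleMonomial :
    iteratedDeriv 2 (halfAngleMonomial a b) θ =
      1 / 4 * (a * (a - 1) * halfAngleMonomial (a - 2) (b + 2) θ +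
        b * (b - 1) * halfAngleMonomial (a + 2) (b - 2) θ -
        (2 * a * b + a + b) * halfAngleMonomial a b θ) := by
  have hderiv : deriv (halfAngleMonomial a b) = fun θ ↦
      a / 2 * halfAngleMonomial (a - 1) (b + 1) θ - b / 2 * halfAngleMonomial (a + 1) (b - 1) θ :=
    funext fun θ ↦ (hasDerivAt_halfAngleMonomial a b θ).deriv
  rw [iteratedDeriv_succ, iteratedDeriv_one, hderiv,
    (((hasDerivAt_halfAngleMonomial _ _ θ).const_mul _).fun_sub
      ((hasDerivAt_halfAngleMonomial _ _ θ).const_mul _)).deriv]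
  rcases a with _ | a <;> rcases b with _ | b <;>
    simp only [Nat.cast_add, Nat.cast_one, Nat.cast_zero, Nat.add_sub_cancel,
      Nat.reduceSubDiff, Nat.zero_sub] <;> ring

theorem iteratedDeriv_two_halfAngleMonomial_add :
    iteratedDeriv 2 (halfAngleMonomial a b) θ + ((a + b) / 2) ^ 2 * halfAngleMonomial a b θ =
      1 / 4 * (a * (a - 1) * halfAngleMonomial (a - 2) b θ +
        b * (b - 1) * halfAngleMonomial a (b - 2) θ) := by
  have hsin : (a * (a - 1) : ℝ) * (halfAngleMonomial a b θ + halfAngleMonomial (a - 2) (b + 2) θ) =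
      a * (a - 1) * halfAngleMonomial (a - 2) b θ := by
    rcases a with _ | _ | a
    · simp
    · simp
    · exact congrArg _ (halfAngleMonomial_add_two_add_add_two _ _ θ)
  have hcos : (b * (b - 1) : ℝ) * (halfAngleMonomial (a + 2) (b - 2) θ + halfAngleMonomial a b θ) =
      b * (b - 1) * halfAngleMonomial a (b - 2) θ := by
    rcases b with _ | _ | b
    · simp
    · simp
    · exact congrArg _ (halfAngleMonomial_add_two_add_add_two _ _ θ)
  rw [iteratedDeriv_two_halfAngleMonomial]
  linear_combination 1 / 4 * (hsin + hcos)

end HalfAngle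

theorem genBinom_pos {u v : ℝ} (hu : -1 < u) (hv : -1 < v) (huv : v < u + 1) : 0 < genBinom u v :=
  div_pos (Gamma_pos_of_pos (by linarith))
    (mul_pos (Gamma_pos_of_pos (by linarith)) (Gamma_pos_of_pos (by linarith)))

theorem genBinom_succ_left {u : ℝ} (hu : u ≠ -1) (v : ℝ) :
    (u + 1 - v) * genBinom (u + 1) v = (u + 1) * genBinom u v := by
  unfold genBinom
  rw [Gamma_add_one (s := u + 1) (by grind), show u + 1 - v = u - v + 1 by ring]
  rcases eq_or_ne (u - v + 1) 0 with h | h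
  · simp [h]
  · rw [Gamma_add_one h]
    field_simp

theorem genBinom_succ_right (u v : ℝ) :
    (v + 1) * genBinom u (v + 1) = (u - v) * genBinom u v := by
  unfold genBinom
  rw [show u - (v + 1) + 1 = u - v by ring]
  -- At a pole `Gamma` is `0`, and both sides vanish.
  rcases eq_or_ne (v + 1) 0 with hv | hv
  · simp [hv]
  rcases eq_or_ne (u - v) 0 with huv | huv
  · simp [huv]
  rw [Gamma_add_one hv, Gamma_add_one huv]
  field_simp

/-- The coefficient of `sin(θ/2)^(2k) cos(θ/2)^(2(n-k))` in `P_n^{(a,b)}(cos θ)`. -/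
noncomputable def jacobiCoeff (n : ℕ) (a b : ℝ) (k : ℕ) : ℝ :=
  (-1) ^ k * genBinom (n + a) (n - k) * genBinom (n + b) k

section JacobiCoeff

variable (n : ℕ) (a b : ℝ) (k : ℕ)

theorem jacobiCoeff_succ :
    (k + 1) * (k + a + 1) * jacobiCoeff n a b (k + 1) =
      -((n - k) * (n - k + b) * jacobiCoeff n a b k) := by
  have ha := genBinom_succ_right (n + a) (n - (k + 1))
  have hb := genBinom_succ_right (n + b) k
  rw [show (n : ℝ) - (k + 1) + 1 = n - k by ring] at ha
  unfold jacobiCoeff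
  push_cast
  linear_combination (-1) ^ k * (k + 1) * genBinom (n + b) (k + 1) * ha -
    (-1) ^ k * (n - k) * genBinom (n + a) (n - k) * hb

theorem jacobiCoeff_add_one {n : ℕ} {a b : ℝ} (ha : n + a ≠ -1) (hb : n + b ≠ -1) (k : ℕ) :
    (k + a + 1) * (n - k + b + 1) * jacobiCoeff n (a + 1) (b + 1) k =
      (n + a + 1) * (n + b + 1) * jacobiCoeff n a b k := by
  have ha' := genBinom_succ_left ha (n - k)
  have hb' := genBinom_succ_left hb k
  unfold jacobiCoeff
  rw [← add_assoc, ← add_assoc]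
  linear_combination (-1) ^ k * (n + b + 1 - k) * genBinom (n + b + 1) k * ha' +
    (-1) ^ k * (n + a + 1) * genBinom (n + a) (n - k) * hb'

theorem jacobiP_cos (θ : ℝ) :
    jacobiP n a b (cos θ) = ∑ k ∈ Finset.range (n + 1),
      jacobiCoeff n a b k * halfAngleMonomial (2 * k) (2 * (n - k)) θ := by
  have hsin : (cos θ - 1) / 2 = -sin (θ / 2) ^ 2 := by
    rw [sin_sq_eq_half_sub, mul_div_cancel₀ θ two_ne_zero]; ring
  have hcos : (cos θ + 1) / 2 = cos (θ / 2) ^ 2 := by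
    rw [cos_sq, mul_div_cancel₀ θ two_ne_zero]; ring
  refine Finset.sum_congr rfl fun k _ ↦ ?_
  rw [hsin, hcos, neg_pow, jacobiCoeff, halfAngleMonomial, pow_mul, pow_mul]
  ring

theorem jacobiP_one : jacobiP n a b 1 = genBinom (n + a) n * genBinom (n + b) 0 := by
  rw [jacobiP, Finset.sum_eq_single_of_mem 0 (by simp)]
  · norm_num
  · intro k _ hk
    simp [hk]

end JacobiCoeff

theorem jacobiP_one_pos {n : ℕ} {a b : ℝ} (ha : -1 < a) (hb : -1 < n + b) :
    0 < jacobiP n a b 1 := by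
  have : (0 : ℝ) ≤ n := n.cast_nonneg
  rw [jacobiP_one]
  exact mul_pos (genBinom_pos (by linarith) (by linarith) (by linarith))
    (genBinom_pos hb (by norm_num) (by linarith))

/-- The function `P_n^{(l-1/2,l-1/2)}(cos θ) (sin θ)^{2l}`, a positive multiple of
`C_n^l(cos θ) (sin θ)^{2l}`. -/
noncomputable def weightedUltraspherical (n l : ℕ) (θ : ℝ) : ℝ :=
  jacobiP n (l - 1 / 2) (l - 1 / 2) (cos θ) * sin θ ^ (2 * l)

/-- The coefficient of `4^l sin(θ/2)^(2(k+l)) cos(θ/2)^(2(n-k+l))` in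
`weightedUltraspherical n l θ`. -/
noncomputable def ultrasphericalCoeff (n l k : ℕ) : ℝ :=
  jacobiCoeff n (l - 1 / 2) (l - 1 / 2) k

section WeightedUltraspherical

variable (n l : ℕ)

theorem even_weightedUltraspherical : Function.Even (weightedUltraspherical n l) := fun θ ↦ by
  simp only [weightedUltraspherical, cos_neg, sin_neg, (even_two_mul l).neg_pow]

theorem weightedUltraspherical_zero_zero_pos : 0 < weightedUltraspherical n 0 0 := by
  have : 0 < jacobiP n ((0 : ℕ) - 1 / 2) ((0 : ℕ) - 1 / 2) 1 :=
    jacobiP_one_pos (by norm_num) (by push_cast; linarith [n.cast_nonneg (α := ℝ)])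
  simpa [weightedUltraspherical] using this

theorem weightedUltraspherical_succ_zero : weightedUltraspherical n (l + 1) 0 = 0 := by
  simp [weightedUltraspherical]

theorem ultrasphericalCoeff_succ (k : ℕ) :
    (k + 1) * (k + l + 1 / 2) * ultrasphericalCoeff n l (k + 1) =
      -((n - k) * (n - k + l - 1 / 2) * ultrasphericalCoeff n l k) := by
  have := jacobiCoeff_succ n (l - 1 / 2) (l - 1 / 2) k
  unfold ultrasphericalCoeff
  linear_combination this

theorem ultrasphericalCoeff_add_one (k : ℕ) :
    (k + l + 1 / 2) * (n - k + l + 1 / 2) * ultrasphericalCoeff n (l + 1) k =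
      (n + l + 1 / 2) * ((n + l + 1 / 2) * ultrasphericalCoeff n l k) := by
  have hne : (n + (l - 1 / 2) : ℝ) ≠ -1 := by
    have : (0 : ℝ) < n + l + 1 / 2 := by positivity
    exact fun h ↦ by linarith
  have := jacobiCoeff_add_one hne hne k
  unfold ultrasphericalCoeff
  rw [Nat.cast_succ, add_sub_right_comm]
  linear_combination this

theorem weightedUltraspherical_eq_sum (θ : ℝ) :
    weightedUltraspherical n l θ = 4 ^ l * ∑ k ∈ Finset.range (n + 1),
      ultrasphericalCoeff n l k * halfAngleMonomial (2 * (k + l)) (2 * (n - k + l)) θ := by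
  have hsin : sin θ ^ (2 * l) = 4 ^ l * (sin (θ / 2) ^ (2 * l) * cos (θ / 2) ^ (2 * l)) := by
    rw [show θ = 2 * (θ / 2) by ring, sin_two_mul, mul_pow, mul_pow, pow_mul 2]
    norm_num [mul_assoc]
  rw [weightedUltraspherical, jacobiP_cos, hsin, Finset.sum_mul, Finset.mul_sum]
  refine Finset.sum_congr rfl fun k _ ↦ ?_
  simp only [ultrasphericalCoeff, halfAngleMonomial, mul_add, pow_add]
  ring

theorem contDiff_weightedUltraspherical {k : WithTop ℕ∞} :
    ContDiff ℝ k (weightedUltraspherical n l) := by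
  rw [funext (weightedUltraspherical_eq_sum n l)]
  exact contDiff_const.mul (.sum fun _ _ ↦ contDiff_const.mul (contDiff_halfAngleMonomial _ _))

theorem continuous_weightedUltraspherical : Continuous (weightedUltraspherical n l) :=
  (contDiff_weightedUltraspherical n l (k := 0)).continuous

theorem iteratedDeriv_two_weightedUltraspherical_add (θ : ℝ) :
    iteratedDeriv 2 (weightedUltraspherical n l) θ +
        (n + 2 * l) ^ 2 * weightedUltraspherical n l θ =
      4 ^ l * ∑ k ∈ Finset.range (n + 1), ultrasphericalCoeff n l k *
        ((k + l) * (k + l - 1 / 2) * halfAngleMonomial (2 * (k + l) - 2) (2 * (n - k + l)) θ +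
          (n - k + l) * (n - k + l - 1 / 2) *
            halfAngleMonomial (2 * (k + l)) (2 * (n - k + l) - 2) θ) := by
  rw [funext (weightedUltraspherical_eq_sum n l), iteratedDeriv_const_mul_field,
    iteratedDeriv_fun_sum fun k _ ↦
      (contDiff_const.mul (contDiff_halfAngleMonomial _ _)).contDiffAt,
    mul_left_comm, ← mul_add, Finset.mul_sum, ← Finset.sum_add_distrib]
  congr 1
  refine Finset.sum_congr rfl fun k hk ↦ ?_
  have hode := iteratedDeriv_two_halfAngleMonomial_add (2 * (k + l)) (2 * (n - k + l)) θ
  push_cast [Nat.cast_sub (Finset.mem_range_succ_iff.1 hk)] at hode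
  rw [iteratedDeriv_const_mul_field]
  linear_combination ultrasphericalCoeff n l k * hode

theorem sum_ultrasphericalCoeff_mul_eq_zero (N : ℕ → ℝ) :
    ∑ k ∈ Finset.range (n + 1), ultrasphericalCoeff n l k *
      (k * (k + l - 1 / 2) * N k + (n - k) * (n - k + l - 1 / 2) * N (k + 1)) = 0 := by
  have h := sum_mul_add_mul_succ_eq_zero (n := n)
    (α := fun k ↦ k * (k + l - 1 / 2) * ultrasphericalCoeff n l k)
    (β := fun k ↦ (n - k) * (n - k + l - 1 / 2) * ultrasphericalCoeff n l k)
    (by simp) (fun k _ ↦ ?_) (by simp) N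
  · rw [← h]
    exact Finset.sum_congr rfl fun k _ ↦ by ring
  · push_cast
    linear_combination ultrasphericalCoeff_succ n l k

theorem weightedUltraspherical_zero_ode (θ : ℝ) :
    iteratedDeriv 2 (weightedUltraspherical n 0) θ + n ^ 2 * weightedUltraspherical n 0 θ = 0 := by
  have hode := iteratedDeriv_two_weightedUltraspherical_add n 0 θ
  simp only [Nat.cast_zero, mul_zero, add_zero, pow_zero, one_mul] at hode
  rw [hode, ← sum_ultrasphericalCoeff_mul_eq_zero n 0
    fun k ↦ halfAngleMonomial (2 * k - 2) (2 * (n - k)) θ]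
  refine Finset.sum_congr rfl fun k _ ↦ ?_
  rw [show 2 * (k + 1) - 2 = 2 * k by omega, show 2 * (n - (k + 1)) = 2 * (n - k) - 2 by omega,
    Nat.cast_zero, add_zero, add_zero]

theorem sum_ultrasphericalCoeff_succ_mul (θ : ℝ) :
    (∑ k ∈ Finset.range (n + 1), ultrasphericalCoeff n (l + 1) k *
      ((k + (l + 1)) * (k + (l + 1) - 1 / 2) *
          halfAngleMonomial (2 * (k + (l + 1)) - 2) (2 * (n - k + (l + 1))) θ +
        (n - k + (l + 1)) * (n - k + (l + 1) - 1 / 2) *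
          halfAngleMonomial (2 * (k + (l + 1))) (2 * (n - k + (l + 1)) - 2) θ)) =
      (l + 1) * (n + l + 1 / 2) * ∑ k ∈ Finset.range (n + 1),
        ultrasphericalCoeff n l k * halfAngleMonomial (2 * (k + l)) (2 * (n - k + l)) θ := by
  have hw : (n + l + 1 / 2 : ℝ) ≠ 0 := by positivity
  have htelescope := sum_ultrasphericalCoeff_mul_eq_zero n (l + 1)
    fun k ↦ halfAngleMonomial (2 * (k + l)) (2 * (n + 1 - k + l)) θ
  -- After multiplication by `w = n + l + 1 / 2` the difference of the two sides is `w + (l + 1)`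
  -- times the telescoping sum.
  refine mul_left_cancel₀ hw ?_
  rw [← add_zero (_ * (_ * _)), ← mul_zero (n + l + 1 / 2 + (l + 1) : ℝ), ← htelescope]
  simp only [Finset.mul_sum, ← Finset.sum_add_distrib]
  refine Finset.sum_congr rfl fun k hk ↦ ?_
  rw [← halfAngleMonomial_add_two_add_add_two (2 * (k + l)) (2 * (n - k + l)),
    show 2 * (k + (l + 1)) - 2 = 2 * (k + l) by omega,
    show 2 * (k + (l + 1)) = 2 * (k + l) + 2 by ring,
    show 2 * (n - k + (l + 1)) - 2 = 2 * (n - k + l) by omega,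
    show 2 * (n - k + (l + 1)) = 2 * (n - k + l) + 2 by ring,
    show 2 * (k + 1 + l) = 2 * (k + l) + 2 by ring,
    show 2 * (n + 1 - (k + 1) + l) = 2 * (n - k + l) by omega,
    show 2 * (n + 1 - k + l) = 2 * (n - k + l) + 2 by grind]
  push_cast
  linear_combination (l + 1) * (halfAngleMonomial (2 * (k + l)) (2 * (n - k + l) + 2) θ +
    halfAngleMonomial (2 * (k + l) + 2) (2 * (n - k + l)) θ) * ultrasphericalCoeff_add_one n l k

theorem weightedUltraspherical_succ_ode (θ : ℝ) :
    iteratedDeriv 2 (weightedUltraspherical n (l + 1)) θ +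
        (n + 2 * (l + 1)) ^ 2 * weightedUltraspherical n (l + 1) θ =
      4 * (l + 1) * (n + l + 1 / 2) * weightedUltraspherical n l θ := by
  have hode := iteratedDeriv_two_weightedUltraspherical_add n (l + 1) θ
  push_cast at hode
  rw [hode, sum_ultrasphericalCoeff_succ_mul, weightedUltraspherical_eq_sum]
  ring

end WeightedUltraspherical

section Positivity

variable {n l : ℕ} {δ t : ℝ}

theorem riemannLiouville_weightedUltraspherical_zero_nonneg (n : ℕ) (hδ : 1 ≤ δ) (ht : 0 ≤ t) :
    0 ≤ riemannLiouville δ (weightedUltraspherical n 0) t :=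
  riemannLiouville_nonneg_of_ode hδ (contDiff_weightedUltraspherical n 0) continuous_const
    (weightedUltraspherical_zero_ode n) (deriv_zero_of_even (even_weightedUltraspherical n 0))
    (weightedUltraspherical_zero_zero_pos n).le (fun x _ ↦ by simp [riemannLiouville]) ht

theorem riemannLiouville_weightedUltraspherical_succ_pos (hδ : 1 ≤ δ)
    (hnonneg : ∀ x > 0, 0 ≤ riemannLiouville (δ - 1) (weightedUltraspherical n l) x)
    (hpos : ∀ᶠ x in 𝓝[>] 0, 0 < riemannLiouville (δ - 1) (weightedUltraspherical n l) x)
    (ht : 0 < t) : 0 < riemannLiouville δ (weightedUltraspherical n (l + 1)) t := by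
  have hc : (0 : ℝ) < 4 * (l + 1) * (n + l + 1 / 2) := by positivity
  refine riemannLiouville_pos_of_ode
    (h := fun θ ↦ 4 * (l + 1) * (n + l + 1 / 2) * weightedUltraspherical n l θ)
    hδ (contDiff_weightedUltraspherical n (l + 1))
    (continuous_const.mul (continuous_weightedUltraspherical n l))
    (weightedUltraspherical_succ_ode n l)
    (deriv_zero_of_even (even_weightedUltraspherical n (l + 1)))
    (weightedUltraspherical_succ_zero n l).ge ?_ ?_ ht
  · intro x hx
    rw [riemannLiouville_const_mul]
    exact mul_nonneg hc.le (hnonneg x hx)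
  · filter_upwards [hpos] with x hx
    rw [riemannLiouville_const_mul]
    exact mul_pos hc hx

theorem riemannLiouville_weightedUltraspherical_nonneg_and_eventually_pos (n l : ℕ)
    (hδ : l + 1 ≤ δ) :
    (∀ x > 0, 0 ≤ riemannLiouville δ (weightedUltraspherical n l) x) ∧
      ∀ᶠ x in 𝓝[>] 0, 0 < riemannLiouville δ (weightedUltraspherical n l) x := by
  induction l generalizing δ with
  | zero =>
    have hδ' : 1 ≤ δ := by simpa using hδ
    exact ⟨fun x hx ↦ riemannLiouville_weightedUltraspherical_zero_nonneg n hδ' (le_of_lt hx),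
      eventually_riemannLiouville_pos (by linarith)
        (continuous_weightedUltraspherical n 0) (weightedUltraspherical_zero_zero_pos n)⟩
  | succ l ih =>
    push_cast at hδ
    obtain ⟨hnonneg, hpos⟩ := ih (δ := δ - 1) (by linarith)
    have hδ' : 1 ≤ δ := by linarith [l.cast_nonneg (α := ℝ)]
    have hall : ∀ x > 0, 0 < riemannLiouville δ (weightedUltraspherical n (l + 1)) x :=
      fun x hx ↦ riemannLiouville_weightedUltraspherical_succ_pos hδ' hnonneg hpos hx
    exact ⟨fun x hx ↦ (hall x hx).le, eventually_mem_nhdsWithin.mono hall⟩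

theorem riemannLiouville_weightedUltraspherical_pos (n : ℕ) (hl : 1 ≤ l) (hδ : l + 1 ≤ δ)
    (ht : 0 < t) : 0 < riemannLiouville δ (weightedUltraspherical n l) t := by
  obtain ⟨l, rfl⟩ := Nat.exists_eq_add_of_le' hl
  push_cast at hδ
  obtain ⟨hnonneg, hpos⟩ :=
    riemannLiouville_weightedUltraspherical_nonneg_and_eventually_pos n l (δ := δ - 1)
      (by linarith)
  exact riemannLiouville_weightedUltraspherical_succ_pos
    (by linarith [l.cast_nonneg (α := ℝ)]) hnonneg hpos ht

theorem FG_natCast_eq (n l : ℕ) (δ t : ℝ) :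
    FG n l δ t = poch (2 * l) n / poch (l + 1 / 2) n *
      riemannLiouville δ (weightedUltraspherical n l) t := by
  rw [FG, ← riemannLiouville_const_mul, riemannLiouville]
  refine intervalIntegral.integral_congr fun θ _ ↦ ?_
  have hpow : sin θ ^ (2 * l : ℝ) = sin θ ^ (2 * l) := by
    rw [← rpow_natCast]
    push_cast
    rfl
  simp only [gegenbauerC, weightedUltraspherical, hpow, mul_assoc]

theorem poch_pos {a : ℝ} (ha : 0 < a) (n : ℕ) : 0 < poch a n :=
  ascPochhammer_pos n a ha

end Positivity

theorem FG_pos_of_nat_lambda_general (lam : ℕ) (hlam : 1 ≤ lam) (δ : ℝ) (hδ : (lam : ℝ) + 1 ≤ δ)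
    (n : ℕ) (t : ℝ) (ht : 0 < t) : 0 < FG n (lam : ℝ) δ t := by
  have : (0 : ℝ) < lam := by exact_mod_cast hlam
  rw [FG_natCast_eq]
  exact mul_pos (div_pos (poch_pos (by positivity) n) (poch_pos (by positivity) n))
    (riemannLiouville_weightedUltraspherical_pos n hlam hδ ht)

theorem FG_pos_of_nat_lambda (lam : ℕ) (hlam : 1 ≤ lam) (δ : ℝ)
    (hδ : (lam : ℝ) + 1 ≤ δ) (n : ℕ) (t : ℝ) (ht : t ∈ Set.Ioc (0:ℝ) π) :
    0 < FG n (lam : ℝ) δ t :=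
  FG_pos_of_nat_lambda_general lam hlam δ hδ n t ht.1
end
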